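/- Let R₁ be a self-relation on a finite set X with Dom R₁ = X = Im R₁, and R₂ a self-relation on a finite set Y with Dom R₂ = Y = Im R₂. Suppose R₁^{j_p} = R₁^{j_p + p} and R₂^{j_q} = R₂^{j_q + q} with p, q ≥ 1 and j_p ≥ j_q ≥ 1. Suppose R₁ and R₂ are shift equivalent with lag l ≥ 1: there exist relations S : X → Y → Prop and T : Y → X → Prop with R₁ ∘ T = T ∘ R₂, S ∘ R₁ = R₂ ∘ S, T ∘ S = R₁^l and S ∘ T = R₂^l. Let W := S ∘ R₁^{j_p} : X → Y → Prop. Then K_{R₁^{j_p}} = K_W, L_{R₂^{j_p}} = L_W, and L_{R₂^{j_q}} = L_{R₂^{j_p}}; in particular the Dowker complexes K_{R₁^{j_p}} and L_{R₂^{j_q}} are the two Dowker complexes of the single relation W. -/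

import Mathlib

/-- The Dowker complex `K_R` of a relation `R : X → Y → Prop`: the set of
nonempty finite subsets `σ ⊆ X` such that there is a `y` with `R x y` for all `x ∈ σ`. -/
def dowkerK {X Y : Type*} (R : X → Y → Prop) : Set (Finset X) :=
  {σ | σ.Nonempty ∧ ∃ y, ∀ x ∈ σ, R x y}

/-- The Dowker complex `L_R` of a relation `R : X → Y → Prop`: the set of
nonempty finite subsets `τ ⊆ Y` such that there is an `x` with `R x y` for all `y ∈ τ`. -/
def dowkerL {X Y : Type*} (R : X → Y → Prop) : Set (Finset Y) :=
  {τ | τ.Nonempty ∧ ∃ x, ∀ y ∈ τ, R x y}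

/-- Composition of relations: `relComp R₁ R₂` is the paper's `R₂ ∘ R₁`,
i.e. `(R₂ ∘ R₁) x z ↔ ∃ y, R₁ x y ∧ R₂ y z`. -/
def relComp {X Y Z : Type*} (R₁ : X → Y → Prop) (R₂ : Y → Z → Prop) : X → Z → Prop :=
  fun x z => ∃ y, R₁ x y ∧ R₂ y z

/-- Powers of a self-relation: `R^0` is equality and `R^(n+1) = R ∘ R^n`. -/
def relPow {X : Type*} (R : X → X → Prop) : ℕ → X → X → Prop
  | 0 => Eq
  | n + 1 => relComp (relPow R n) R

/-!
If `Q` is left-total then `K_P ⊆ K_{Q ∘ P}`, because the witness of a simplex can be moved along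
`Q`. Hence, for left-total `R`, the sequence `n ↦ K_{R^n}` is increasing; if `R^j = R^(j + p)`, it
returns to `K_{R^j}` infinitely often, so it is constant from `j` on. If `T ∘ S = R^l` with `S` and
`T` left-total, then `K_{R^n} ⊆ K_{S ∘ R^n} ⊆ K_{T ∘ S ∘ R^n} = K_{R^(n + l)}`, and for `n ≥ j` the
two ends agree. The statements about `L` are those about `K` for the converse relations.
-/

open Relator

theorem relComp_assoc {A B C D : Type*} (P : A → B → Prop) (Q : B → C → Prop) (R : C → D → Prop) :
    relComp (relComp P Q) R = relComp P (relComp Q R) :=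
  Relation.comp_assoc

theorem flip_relComp {A B C : Type*} (P : A → B → Prop) (Q : B → C → Prop) :
    flip (relComp P Q) = relComp (flip Q) (flip P) :=
  Relation.flip_comp

section Total

variable {A B C : Type*} {P : A → B → Prop} {Q : B → C → Prop}

theorem leftTotal_relComp (hP : LeftTotal P) (hQ : LeftTotal Q) : LeftTotal (relComp P Q) :=
  hP.trans (fun _ b _ hab hbc => ⟨b, hab, hbc⟩) hQ

theorem leftTotal_of_relComp (h : LeftTotal (relComp P Q)) : LeftTotal P := fun a =>
  let ⟨_, b, hab, _⟩ := h a
  ⟨b, hab⟩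

theorem rightTotal_of_relComp (h : RightTotal (relComp P Q)) : RightTotal Q := fun c =>
  let ⟨_, b, _, hbc⟩ := h c
  ⟨b, hbc⟩

end Total

section Powers

variable {A B : Type*} {R : A → A → Prop}

theorem relPow_add (R : A → A → Prop) (m n : ℕ) :
    relPow R (m + n) = relComp (relPow R m) (relPow R n) := by
  induction n with
  | zero => exact Relation.comp_eq.symm
  | succ n ih =>
    calc
      relPow R (m + (n + 1)) = relComp (relPow R (m + n)) R := rfl
      _ = relComp (relPow R m) (relPow R (n + 1)) := by rw [ih, relComp_assoc, relPow]

theorem relComp_relPow_of_semiconj {Q : B → B → Prop} {S : A → B → Prop}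
    (h : relComp R S = relComp S Q) (n : ℕ) :
    relComp (relPow R n) S = relComp S (relPow Q n) := by
  induction n with
  | zero => exact Relation.eq_comp.trans Relation.comp_eq.symm
  | succ n ih => rw [relPow, relPow, relComp_assoc, h, ← relComp_assoc, ih, relComp_assoc]

theorem flip_relPow (R : A → A → Prop) (n : ℕ) : flip (relPow R n) = relPow (flip R) n := by
  induction n with
  | zero => exact funext₂ fun _ _ => propext eq_comm
  | succ n ih => rw [relPow, flip_relComp, ih, ← relComp_relPow_of_semiconj rfl, relPow]

theorem leftTotal_relPow (hR : LeftTotal R) (n : ℕ) : LeftTotal (relPow R n) := by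
  induction n with
  | zero => exact fun a => ⟨a, rfl⟩
  | succ n ih => exact leftTotal_relComp ih hR

theorem rightTotal_relPow (hR : RightTotal R) (n : ℕ) : RightTotal (relPow R n) :=
  show LeftTotal (flip (relPow R n)) from flip_relPow R n ▸ leftTotal_relPow hR n

theorem relPow_add_mul_of_eq_add {j p : ℕ} (h : relPow R j = relPow R (j + p)) (k : ℕ) :
    relPow R (j + k * p) = relPow R j := by
  induction k with
  | zero => rw [zero_mul, add_zero]
  | succ k ih => rw [add_one_mul, ← add_assoc, relPow_add, ih, ← relPow_add, ← h]

end Powers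

theorem dowkerL_eq_dowkerK_flip {A B : Type*} (R : A → B → Prop) : dowkerL R = dowkerK (flip R) :=
  rfl

theorem dowkerK_subset_dowkerK_relComp {A B C : Type*} (P : A → B → Prop) {Q : B → C → Prop}
    (hQ : LeftTotal Q) : dowkerK P ⊆ dowkerK (relComp P Q) := by
  rintro σ ⟨hσ, b, hb⟩
  obtain ⟨c, hbc⟩ := hQ b
  exact ⟨hσ, c, fun a ha => ⟨b, hb a ha, hbc⟩⟩

section DowkerRelPow

variable {A B : Type*} {R : A → A → Prop} {S : A → B → Prop} {T : B → A → Prop} {j n p l : ℕ}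

theorem dowkerK_relPow_mono (hR : LeftTotal R) : Monotone fun n => dowkerK (relPow R n) := by
  intro m n hmn
  obtain ⟨d, rfl⟩ := Nat.exists_eq_add_of_le hmn
  simpa only [relPow_add] using
    dowkerK_subset_dowkerK_relComp (relPow R m) (leftTotal_relPow hR d)

theorem dowkerK_relPow_eq_of_le (hR : LeftTotal R) (hp : 0 < p)
    (hper : relPow R j = relPow R (j + p)) (hjn : j ≤ n) :
    dowkerK (relPow R n) = dowkerK (relPow R j) := by
  refine Set.Subset.antisymm ?_ (dowkerK_relPow_mono hR hjn)
  have hn : n ≤ j + n * p := (Nat.le_mul_of_pos_right n hp).trans (Nat.le_add_left _ j)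
  calc
    dowkerK (relPow R n) ⊆ dowkerK (relPow R (j + n * p)) := dowkerK_relPow_mono hR hn
    _ = dowkerK (relPow R j) := by rw [relPow_add_mul_of_eq_add hper]

theorem dowkerL_relPow_eq_of_le (hR : RightTotal R) (hp : 0 < p)
    (hper : relPow R j = relPow R (j + p)) (hjn : j ≤ n) :
    dowkerL (relPow R n) = dowkerL (relPow R j) := by
  have hper' : relPow (flip R) j = relPow (flip R) (j + p) := by
    rw [← flip_relPow, ← flip_relPow, hper]
  simpa only [dowkerL_eq_dowkerK_flip, flip_relPow] using
    dowkerK_relPow_eq_of_le (R := flip R) hR hp hper' hjn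

theorem dowkerK_relComp_relPow_eq (hR : LeftTotal R) (hT : LeftTotal T)
    (hST : relComp S T = relPow R l) (hp : 0 < p) (hper : relPow R j = relPow R (j + p))
    (hjn : j ≤ n) : dowkerK (relComp (relPow R n) S) = dowkerK (relPow R n) := by
  have hS : LeftTotal S := leftTotal_of_relComp (hST ▸ leftTotal_relPow hR l)
  refine Set.Subset.antisymm ?_ (dowkerK_subset_dowkerK_relComp _ hS)
  calc
    dowkerK (relComp (relPow R n) S)
      ⊆ dowkerK (relComp (relComp (relPow R n) S) T) := dowkerK_subset_dowkerK_relComp _ hT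
    _ = dowkerK (relPow R (n + l)) := by rw [relComp_assoc, hST, ← relPow_add]
    _ = dowkerK (relPow R j) := dowkerK_relPow_eq_of_le hR hp hper (Nat.le_add_right_of_le hjn)
    _ = dowkerK (relPow R n) := (dowkerK_relPow_eq_of_le hR hp hper hjn).symm

theorem dowkerL_relComp_relPow_eq (hR : RightTotal R) (hS : RightTotal S)
    (hST : relComp S T = relPow R l) (hp : 0 < p) (hper : relPow R j = relPow R (j + p))
    (hjn : j ≤ n) : dowkerL (relComp T (relPow R n)) = dowkerL (relPow R n) := by
  have hTS : relComp (flip T) (flip S) = relPow (flip R) l := by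
    rw [← flip_relComp, hST, flip_relPow]
  have hper' : relPow (flip R) j = relPow (flip R) (j + p) := by
    rw [← flip_relPow, ← flip_relPow, hper]
  simpa only [dowkerL_eq_dowkerK_flip, flip_relComp, flip_relPow] using
    dowkerK_relComp_relPow_eq (R := flip R) hR hS hTS hp hper' hjn

end DowkerRelPow

theorem stmt10_general {X Y : Type*} {R₁ : X → X → Prop} {R₂ : Y → Y → Prop}
    (hDom₁ : LeftTotal R₁) (hIm₁ : RightTotal R₁) (hDom₂ : LeftTotal R₂) (hIm₂ : RightTotal R₂)
    {jp jq p q l : ℕ} (hp : 0 < p) (hq : 0 < q) (hjpq : jq ≤ jp)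
    (hper₁ : relPow R₁ jp = relPow R₁ (jp + p)) (hper₂ : relPow R₂ jq = relPow R₂ (jq + q))
    {S : X → Y → Prop} {T : Y → X → Prop} (hRS : relComp R₁ S = relComp S R₂)
    (hST : relComp S T = relPow R₁ l) (hTS : relComp T S = relPow R₂ l) :
    dowkerK (relPow R₁ jp) = dowkerK (relComp (relPow R₁ jp) S) ∧
    dowkerL (relPow R₂ jp) = dowkerL (relComp (relPow R₁ jp) S) ∧
    dowkerL (relPow R₂ jq) = dowkerL (relPow R₂ jp) := by
  have hT_left : LeftTotal T := leftTotal_of_relComp (hTS ▸ leftTotal_relPow hDom₂ l)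
  have hT_right : RightTotal T := rightTotal_of_relComp (hST ▸ rightTotal_relPow hIm₁ l)
  refine ⟨?_, ?_, ?_⟩
  · exact (dowkerK_relComp_relPow_eq hDom₁ hT_left hST hp hper₁ le_rfl).symm
  · rw [relComp_relPow_of_semiconj hRS]
    exact (dowkerL_relComp_relPow_eq hIm₂ hT_right hTS hq hper₂ hjpq).symm
  · exact (dowkerL_relPow_eq_of_le hIm₂ hq hper₂ hjpq).symm

theorem stmt10 {X Y : Type*} [Fintype X] [Fintype Y]
    (R₁ : X → X → Prop) (R₂ : Y → Y → Prop)
    (hDom₁ : ∀ x, ∃ y, R₁ x y) (hIm₁ : ∀ y, ∃ x, R₁ x y)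
    (hDom₂ : ∀ x, ∃ y, R₂ x y) (hIm₂ : ∀ y, ∃ x, R₂ x y)
    (jp jq p q l : ℕ) (hp : 1 ≤ p) (hq : 1 ≤ q) (hl : 1 ≤ l)
    (hjq : 1 ≤ jq) (hjpq : jq ≤ jp)
    (hper₁ : relPow R₁ jp = relPow R₁ (jp + p))
    (hper₂ : relPow R₂ jq = relPow R₂ (jq + q))
    (S : X → Y → Prop) (T : Y → X → Prop)
    (h₁ : relComp T R₁ = relComp R₂ T)
    (h₂ : relComp R₁ S = relComp S R₂)
    (h₃ : relComp S T = relPow R₁ l)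
    (h₄ : relComp T S = relPow R₂ l) :
    dowkerK (relPow R₁ jp) = dowkerK (relComp (relPow R₁ jp) S) ∧
    dowkerL (relPow R₂ jp) = dowkerL (relComp (relPow R₁ jp) S) ∧
    dowkerL (relPow R₂ jq) = dowkerL (relPow R₂ jp) :=
  stmt10_general hDom₁ hIm₁ hDom₂ hIm₂ hp hq hjpq hper₁ hper₂ h₂ h₃ h₄
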